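/- Let n ≥ 2, let U ⊆ ℝⁿ be an open set, and let S : ℝⁿ → Matrix (Fin n) (Fin n) ℝ be continuous with S(x) symmetric for every x. Suppose that for every smooth compactly supported map T : ℝⁿ → Matrix (Fin n) (Fin n) ℝ with support contained in U and with T(x) symmetric for every x, one has ∫ (Tr(T(x)·S(x)) − Tr(T(x))·Tr(S(x))) dx = 0 (integral over ℝⁿ with Lebesgue measure). Then S(x) = 0 for every x ∈ U. -/

import Mathlib

open Matrix MeasureTheory

/-- Euclidean version of Lemma 2.4: if a continuous symmetric-matrix-valued `S` on `ℝⁿ`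
(`n ≥ 2`) satisfies `∫ (Tr(T·S) − Tr(T)·Tr(S)) = 0` for every smooth compactly
supported symmetric-matrix-valued `T` with support in the open set `U`, then `S`
vanishes on `U`. -/
theorem stmt8 (n : ℕ) (hn : 2 ≤ n) (U : Set (Fin n → ℝ)) (hU : IsOpen U)
    (S : (Fin n → ℝ) → Matrix (Fin n) (Fin n) ℝ)
    (hScont : ∀ i j, Continuous (fun x => S x i j))
    (hSsymm : ∀ x, (S x)ᵀ = S x)
    (h : ∀ T : (Fin n → ℝ) → Matrix (Fin n) (Fin n) ℝ,
      (∀ i j, ContDiff ℝ (⊤ : ℕ∞) (fun x => T x i j)) →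
      HasCompactSupport T →
      tsupport T ⊆ U →
      (∀ x, (T x)ᵀ = T x) →
      ∫ x, ((T x * S x).trace - (T x).trace * (S x).trace) = 0) :
    ∀ x ∈ U, S x = 0 := by
  have key : ∀ A : Matrix (Fin n) (Fin n) ℝ, Aᵀ = A → ∀ x ∈ U,
      (A * S x).trace - A.trace * (S x).trace = 0 := by
    intro A hA
    have hSc : Continuous S := continuous_matrix hScont
    have hc : Continuous (fun x => (A * S x).trace - A.trace * (S x).trace) := by
      have h1 : Continuous (fun x => A * S x) := continuous_const.matrix_mul hSc
      exact h1.matrix_trace.sub (continuous_const.mul hSc.matrix_trace)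
    have hae := hU.ae_eq_zero_of_integral_contDiff_smul_eq_zero (μ := volume)
      (hc.locallyIntegrable.locallyIntegrableOn U) (by
        intro g hg hgc hgU
        have hsub : tsupport (fun x => g x • A) ⊆ tsupport g :=
          closure_mono (fun x hx hgx => hx (by simp [hgx]))
        have := h (fun x => g x • A) ?_ ?_ (hsub.trans hgU) ?_
        · rw [← this]
          congr 1
          ext x
          simp only [Matrix.smul_mul, Matrix.trace_smul, smul_eq_mul]
          ring
        · intro i j
          simp only [Matrix.smul_apply, smul_eq_mul]
          exact hg.mul contDiff_const
        · exact hgc.of_isClosed_subset (isClosed_tsupport _) hsub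
        · intro x
          simp [hA])
    have hE := Measure.eqOn_open_of_ae_eq (μ := volume) (g := fun _ => (0 : ℝ))
      ((ae_restrict_iff' hU.measurableSet).2 hae) hU hc.continuousOn continuousOn_const
    exact fun x hx => hE hx
  intro x hx
  have h1 := key 1 (by simp) x hx
  have hn' : (2 : ℝ) ≤ n := by exact_mod_cast hn
  have htr : (S x).trace = 0 := by
    simp only [one_mul, Matrix.trace_one, Fintype.card_fin] at h1
    have : ((n : ℝ) - 1) * (S x).trace = 0 := by linarith
    rcases mul_eq_zero.1 this with h2 | h2
    · linarith
    · exact h2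
  have h2 := key (S x) (hSsymm x) x hx
  rw [htr, mul_zero, sub_zero] at h2
  have h3 : ((S x)ᴴ * S x).trace = 0 := by
    rw [Matrix.conjTranspose_eq_transpose_of_trivial, hSsymm x, h2]
  exact Matrix.trace_conjTranspose_mul_self_eq_zero_iff.1 h3
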